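/- Let d ≥ 2, let p be a symmetric probability mass function on ℤ with ψ(s) := Σ_{j∈ℤ} e^{sj} p(j) < ∞ for all s ∈ (−R, R), R > 0, and let H be the almost-sure limit of the spherical averages H_r of the free height field with increment law p on the rooted Cayley tree of order d. Let κ_n denote the n-th cumulant of a single increment (with law p) and κ_n^T the n-th cumulant of H. Then κ_1^T = 0, and for every n ≥ 2, κ_n^T = κ_n · d^{n−1} / ( (d^{n−1} − 1)(d+1)^{n−1} ). -/

import Mathlib

open MeasureTheory ProbabilityTheory Filter Finset Topology

noncomputable section

/-- A non-root vertex of the rooted Cayley tree of order `d`: the first step from the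
root is one of `d+1` children, every further step one of `d` children. -/
abbrev Vertex (d : ℕ) : Type := Fin (d + 1) × List (Fin d)

/-- depth of a non-root vertex -/
def vdepth {d : ℕ} (v : Vertex d) : ℕ := v.2.length + 1

/-- the sphere `W_r` of radius `r ≥ 1`: all vertices of depth `r` -/
def sphereW (d r : ℕ) : Finset (Vertex d) :=
  (Finset.univ : Finset (Fin (d + 1) × (Fin (r - 1) → Fin d))).image
    (fun x => (x.1, List.ofFn x.2))

/-- height at `v`: sum of the increments along the path from the root to `v`
(the prefixes of length `0,…,|v.2|` of the step list of `v` enumerate that path). -/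
def heightAt {d : ℕ} {Ω : Type*} (Y : Vertex d → Ω → ℝ) (v : Vertex d) (ω : Ω) : ℝ :=
  ∑ k ∈ Finset.range (v.2.length + 1), Y (v.1, v.2.take k) ω

/-- spherical average `H_r` of the heights at depth `r` -/
def sphAvg (d : ℕ) {Ω : Type*} (Y : Vertex d → Ω → ℝ) (r : ℕ) (ω : Ω) : ℝ :=
  (((d + 1) * d ^ (r - 1) : ℕ) : ℝ)⁻¹ * ∑ v ∈ sphereW d r, heightAt Y v ω

/-!
The spherical average is the weighted sum `H_r = ∑ Y_v / |W_{|v|}|` over the vertices `v` of depth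
at most `r`, so its cumulant generating function is `S_r(t) = ∑ₖ |Wₖ| K(t / |Wₖ|)`, where `K` is
that of one increment. Splitting off the first layer,
`S_{r+1}(t) = (d + 1) K(t / (d + 1)) + d S_r(t / d)`.
Centred increments give `K(s) = O(s²)`, and `∑ₖ 1 / |Wₖ| ≤ 1`, hence `|S_r(t)| ≤ C t²` uniformly
in `r`. Near `t = 0` the variables `exp (t H_r)` are therefore bounded in `L²`, hence uniformly
integrable, and `S_r(t)` converges to the cumulant generating function `G` of `H`. In the limit
`G(t) = (d + 1) K(t / (d + 1)) + d G(t / d)`, and differentiating `n ≥ 2` times at `0` yields the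
`n`-th cumulant. For `n = 1` the derivative `G'(0)` cancels from this identity; it vanishes because
`G(t) = O(t²)`.
-/

section Calculus

variable {𝕜 E : Type*} [NontriviallyNormedField 𝕜] [NormedAddCommGroup E] [NormedSpace 𝕜 E]

lemma isBigO_sub_pow_of_iteratedDeriv_eq_zero [CharZero 𝕜] [CompleteSpace E] {f : 𝕜 → E} {z₀ : 𝕜}
    (hf : AnalyticAt 𝕜 f z₀) {n : ℕ} (h : ∀ i < n, iteratedDeriv i f z₀ = 0) :
    f =O[𝓝 z₀] fun z => (z - z₀) ^ n := by
  obtain ⟨g, hg, hfg⟩ := (natCast_le_analyticOrderAt hf).1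
    ((natCast_le_analyticOrderAt_iff_iteratedDeriv_eq_zero hf).2 h)
  refine Asymptotics.IsBigO.congr' ?_ (EventuallyEq.symm hfg) (f₁ := fun z => (z - z₀) ^ n • g z)
    EventuallyEq.rfl
  simpa using (Asymptotics.isBigO_refl (fun z => (z - z₀) ^ n) (𝓝 z₀)).smul
    (hg.continuousAt.isBigO_one 𝕜)

lemma iteratedDeriv_comp_mul_left (c : 𝕜) (f : 𝕜 → E) (n : ℕ) :
    iteratedDeriv n (fun x => f (c * x)) = fun x => c ^ n • iteratedDeriv n f (c * x) := by
  induction n with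
  | zero => simp
  | succ n ih =>
    ext x
    rw [iteratedDeriv_succ, ih, deriv_fun_const_smul_field, deriv_comp_mul_left,
      ← iteratedDeriv_succ, smul_smul, pow_succ]

lemma contDiffAt_zero_mul_comp_mul_left {f : 𝕜 → 𝕜} {n : WithTop ℕ∞} (hf : ContDiffAt 𝕜 n f 0)
    (a c : 𝕜) : ContDiffAt 𝕜 n (fun t => a * f (c * t)) 0 :=
  contDiffAt_const.mul <| ContDiffAt.comp 0 (by simpa using hf) (contDiffAt_const.mul contDiffAt_id)

lemma iteratedDeriv_eq_of_functional_equation {G K : 𝕜 → 𝕜} {a b : 𝕜} {n : ℕ}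
    (ha : a ≠ 0) (hb : b ≠ 0) (hbn : b ^ n ≠ 1)
    (hG : ContDiffAt 𝕜 (n + 1 : ℕ) G 0) (hK : ContDiffAt 𝕜 (n + 1 : ℕ) K 0)
    (hfun : ∀ᶠ t in 𝓝 0, G t = a * K (a⁻¹ * t) + b * G (b⁻¹ * t)) :
    iteratedDeriv (n + 1) G 0 =
      iteratedDeriv (n + 1) K 0 * b ^ n / ((b ^ n - 1) * a ^ n) := by
  have hderiv : iteratedDeriv (n + 1) G 0 =
      a * (a⁻¹ ^ (n + 1) * iteratedDeriv (n + 1) K 0) +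
        b * (b⁻¹ ^ (n + 1) * iteratedDeriv (n + 1) G 0) := by
    refine (EventuallyEq.iteratedDeriv_eq _ hfun).trans ?_
    rw [iteratedDeriv_fun_add
      (contDiffAt_zero_mul_comp_mul_left hK _ _) (contDiffAt_zero_mul_comp_mul_left hG _ _)]
    simp only [iteratedDeriv_const_mul_field, iteratedDeriv_comp_mul_left, mul_zero, smul_eq_mul]
  have hbn' : b ^ n - 1 ≠ 0 := sub_ne_zero.2 hbn
  rw [inv_pow, inv_pow, pow_succ, pow_succ] at hderiv
  field_simp at hderiv ⊢
  linear_combination hderiv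

end Calculus

section UniformIntegrability

variable {Ω ι : Type*} [MeasurableSpace Ω] {P : Measure Ω} [IsFiniteMeasure P]

lemma uniformIntegrable_of_eLpNorm_le {E : Type*} [NormedAddCommGroup E]
    {f : ι → Ω → E} {p q : ENNReal} (hp : p ≠ 0) (hpq : p < q) {C : NNReal}
    (hf : ∀ i, AEStronglyMeasurable (f i) P) (hC : ∀ i, eLpNorm (f i) q P ≤ C) :
    UniformIntegrable f p P := by
  set α : ℝ := 1 / p.toReal - 1 / q.toReal
  have hα : 0 < α := by
    have hp' : 0 < p.toReal := ENNReal.toReal_pos hp hpq.ne_top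
    rcases eq_or_ne q ⊤ with hq | hq
    · simp [α, hq, hp']
    · exact sub_pos.2 (one_div_lt_one_div_of_lt hp' (ENNReal.toReal_strict_mono hq hpq))
  refine ⟨hf, fun ε hε => ?_, (C * P Set.univ ^ α).toNNReal, fun i => ?_⟩
  · have hlim : Tendsto (fun δ : ℝ => C * ENNReal.ofReal δ ^ α) (𝓝[>] 0) (𝓝 0) := by
      have h := ENNReal.Tendsto.const_mul (a := (C : ENNReal))
        (((ENNReal.continuous_rpow_const (y := α)).comp ENNReal.continuous_ofReal).tendsto 0)
        (Or.inr ENNReal.coe_ne_top)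
      simpa [hα] using h.mono_left nhdsWithin_le_nhds
    obtain ⟨δ, hδε, hδ⟩ := ((hlim.eventually_le_const (ENNReal.ofReal_pos.2 hε)).and
      self_mem_nhdsWithin).exists
    refine ⟨δ, hδ, fun i s hs hsδ => ?_⟩
    calc eLpNorm (s.indicator (f i)) p P
        ≤ eLpNorm (f i) q (P.restrict s) * P.restrict s Set.univ ^ α := by
          rw [eLpNorm_indicator_eq_eLpNorm_restrict hs]
          exact eLpNorm_le_eLpNorm_mul_rpow_measure_univ hpq.le (hf i).restrict
      _ ≤ C * ENNReal.ofReal δ ^ α := by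
          rw [Measure.restrict_apply_univ]
          gcongr
          exact (eLpNorm_mono_measure _ Measure.restrict_le_self).trans (hC i)
      _ ≤ ENNReal.ofReal ε := hδε
  · rw [ENNReal.coe_toNNReal (by finiteness)]
    exact (eLpNorm_le_eLpNorm_mul_rpow_measure_univ hpq.le (hf i)).trans (by gcongr; exact hC i)

lemma tendsto_integral_of_uniformIntegrable {E : Type*} [NormedAddCommGroup E] [NormedSpace ℝ E]
    {f : ℕ → Ω → E} {g : Ω → E} (hf : UniformIntegrable f 1 P)
    (hfg : ∀ᵐ ω ∂P, Tendsto (fun n => f n ω) atTop (𝓝 (g ω))) :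
    Tendsto (fun n => ∫ ω, f n ω ∂P) atTop (𝓝 (∫ ω, g ω ∂P)) :=
  tendsto_integral_of_L1' g (hf.integrable_of_ae_tendsto hfg).aestronglyMeasurable
    (Eventually.of_forall fun n => memLp_one_iff_integrable.1 (hf.memLp n))
    (tendsto_Lp_finite_of_tendsto_ae le_rfl ENNReal.one_ne_top hf.1
      (hf.memLp_of_ae_tendsto hfg) hf.2.1 hfg)

lemma uniformIntegrable_exp_mul {Z : ι → Ω → ℝ} {t M : ℝ}
    (hexp : ∀ i, 2 * t ∈ integrableExpSet (Z i) P) (hM : ∀ i, mgf (Z i) P (2 * t) ≤ M) :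
    UniformIntegrable (fun i ω => Real.exp (t * Z i ω)) 1 P := by
  have hsq : ∀ x : ℝ, Real.exp (t * x) ^ 2 = Real.exp (2 * t * x) := fun x => by
    rw [← Real.exp_nat_mul]; push_cast; ring_nf
  have hmeas : ∀ i, AEStronglyMeasurable (fun ω => Real.exp (t * Z i ω)) P := fun i => by
    have h := (hexp i).aestronglyMeasurable.aemeasurable.sqrt
    simp only [← hsq, Real.sqrt_sq (Real.exp_nonneg _)] at h
    exact h.aestronglyMeasurable
  have hmemLp : ∀ i, MemLp (fun ω => Real.exp (t * Z i ω)) 2 P := fun i =>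
    (memLp_two_iff_integrable_sq (hmeas i)).2 (by simp only [hsq]; exact hexp i)
  refine uniformIntegrable_of_eLpNorm_le one_ne_zero ENNReal.one_lt_two
    (C := (√M).toNNReal) hmeas fun i => ?_
  rw [(hmemLp i).eLpNorm_eq_integral_rpow_norm two_ne_zero ENNReal.ofNat_ne_top,
    ENNReal.toReal_ofNat, ← one_div, ← Real.sqrt_eq_rpow]
  simp only [Real.rpow_ofNat, Real.norm_eq_abs, sq_abs, hsq]
  exact ENNReal.ofReal_le_ofReal (Real.sqrt_le_sqrt (hM i))

lemma mem_integrableExpSet_and_tendsto_mgf {Z : ℕ → Ω → ℝ} {W : Ω → ℝ} {t M : ℝ}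
    (hexp : ∀ n, 2 * t ∈ integrableExpSet (Z n) P) (hM : ∀ n, mgf (Z n) P (2 * t) ≤ M)
    (hlim : ∀ᵐ ω ∂P, Tendsto (fun n => Z n ω) atTop (𝓝 (W ω))) :
    t ∈ integrableExpSet W P ∧ Tendsto (fun n => mgf (Z n) P t) atTop (𝓝 (mgf W P t)) := by
  have hlim' : ∀ᵐ ω ∂P,
      Tendsto (fun n => Real.exp (t * Z n ω)) atTop (𝓝 (Real.exp (t * W ω))) := by
    filter_upwards [hlim] with ω hω
    exact (Real.continuous_exp.tendsto _).comp (hω.const_mul t)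
  have hui := uniformIntegrable_exp_mul hexp hM
  exact ⟨hui.integrable_of_ae_tendsto hlim', tendsto_integral_of_uniformIntegrable hui hlim'⟩

end UniformIntegrability

section Tree

variable {d : ℕ}

lemma sum_sphereW_succ {M : Type*} [AddCommMonoid M] (r : ℕ) (f : Vertex d → M) :
    ∑ v ∈ sphereW d (r + 1), f v =
      ∑ x : Fin (d + 1) × (Fin r → Fin d), f (x.1, List.ofFn x.2) :=
  Finset.sum_image (Function.injective_id.prodMap List.ofFn_injective).injOn

lemma vdepth_of_mem_sphereW_succ {r : ℕ} {v : Vertex d} (hv : v ∈ sphereW d (r + 1)) :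
    vdepth v = r + 1 := by
  obtain ⟨x, -, rfl⟩ := Finset.mem_image.1 hv
  simp [vdepth]

lemma card_sphereW_succ (d r : ℕ) : #(sphereW d (r + 1)) = (d + 1) * d ^ r := by
  rw [card_eq_sum_ones, sum_sphereW_succ]
  simp

lemma sum_sphereW_succ_succ {M : Type*} [AddCommMonoid M] (r : ℕ) (f : Vertex d → M) :
    ∑ v ∈ sphereW d (r + 2), f v =
      ∑ v ∈ sphereW d (r + 1), ∑ x : Fin d, f (v.1, v.2 ++ [x]) := by
  rw [sum_sphereW_succ, sum_sphereW_succ, Fintype.sum_prod_type, Fintype.sum_prod_type]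
  refine Finset.sum_congr rfl fun i _ => ?_
  rw [← (Fin.snocEquiv fun _ => Fin d).sum_comp, Fintype.sum_prod_type_right]
  refine Finset.sum_congr rfl fun a _ => Finset.sum_congr rfl fun x _ => ?_
  rw [List.ofFn_succ']
  simp [Fin.snocEquiv]

section Height

variable {Ω : Type*} (Y : Vertex d → Ω → ℝ)

lemma heightAt_append_singleton (i : Fin (d + 1)) (l : List (Fin d)) (x : Fin d) (ω : Ω) :
    heightAt Y (i, l ++ [x]) ω = heightAt Y (i, l) ω + Y (i, l ++ [x]) ω := by
  simp only [heightAt, List.length_append, List.length_singleton]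
  rw [Finset.sum_range_succ]
  congr 1
  · refine Finset.sum_congr rfl fun k hk => ?_
    rw [List.take_append_of_le_length (by simpa [Nat.lt_succ_iff] using hk)]
  · rw [List.take_of_length_le (by simp)]

lemma sum_heightAt_succ (r : ℕ) (ω : Ω) :
    ∑ v ∈ sphereW d (r + 2), heightAt Y v ω =
      d * ∑ v ∈ sphereW d (r + 1), heightAt Y v ω + ∑ v ∈ sphereW d (r + 2), Y v ω := by
  rw [sum_sphereW_succ_succ, sum_sphereW_succ_succ r fun v => Y v ω, Finset.mul_sum,
    ← Finset.sum_add_distrib]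
  refine Finset.sum_congr rfl fun v _ => ?_
  simp [heightAt_append_singleton, Finset.sum_add_distrib]

lemma sphAvg_one (ω : Ω) :
    sphAvg d Y 1 ω = ((d : ℝ) + 1)⁻¹ * ∑ v ∈ sphereW d 1, Y v ω := by
  rw [sphAvg, sum_sphereW_succ 0, sum_sphereW_succ 0]
  simp [heightAt]

lemma sphAvg_succ (hd : d ≠ 0) (r : ℕ) (ω : Ω) :
    sphAvg d Y (r + 2) ω = sphAvg d Y (r + 1) ω +
      (((d + 1) * d ^ (r + 1) : ℕ) : ℝ)⁻¹ * ∑ v ∈ sphereW d (r + 2), Y v ω := by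
  simp only [sphAvg, sum_heightAt_succ, mul_add, Nat.add_sub_cancel]
  congr 1
  push_cast
  field_simp
  ring

end Height

/-- The set of non-root vertices of depth at most `r`. -/
def ballW (d r : ℕ) : Finset (Vertex d) :=
  (range r).biUnion fun k => sphereW d (k + 1)

/-- The weight `1 / |W_r|` of a vertex `v` of depth `r`: the coefficient of the increment at `v`
in the spherical averages at depth `r` and beyond. -/
def vertexWeight (v : Vertex d) : ℝ := (#(sphereW d (vdepth v)) : ℝ)⁻¹

lemma vertexWeight_mem_Icc (v : Vertex d) : vertexWeight v ∈ Set.Icc (0 : ℝ) 1 :=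
  ⟨inv_nonneg.2 (Nat.cast_nonneg _), Nat.cast_inv_le_one _⟩

lemma vertexWeight_of_mem_sphereW_succ {r : ℕ} {v : Vertex d} (hv : v ∈ sphereW d (r + 1)) :
    vertexWeight v = (((d + 1) * d ^ r : ℕ) : ℝ)⁻¹ := by
  rw [vertexWeight, vdepth_of_mem_sphereW_succ hv, card_sphereW_succ]

lemma sum_ballW {M : Type*} [AddCommMonoid M] (r : ℕ) (f : Vertex d → M) :
    ∑ v ∈ ballW d r, f v = ∑ k ∈ range r, ∑ v ∈ sphereW d (k + 1), f v := by
  refine Finset.sum_biUnion fun k _ l _ hkl => Finset.disjoint_left.2 fun v hk hl => hkl ?_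
  have h := (vdepth_of_mem_sphereW_succ hk).symm.trans (vdepth_of_mem_sphereW_succ hl)
  exact Nat.succ_injective h

lemma sum_ballW_comp_vertexWeight {M : Type*} [AddCommMonoid M] (d r : ℕ) (f : ℝ → M) :
    ∑ v ∈ ballW d r, f (vertexWeight v) =
      ∑ k ∈ range r, ((d + 1) * d ^ k) • f (((d + 1) * d ^ k : ℕ) : ℝ)⁻¹ := by
  rw [sum_ballW]
  refine Finset.sum_congr rfl fun k _ => ?_
  rw [← card_sphereW_succ, ← Finset.sum_const]
  exact Finset.sum_congr rfl fun v hv => by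
    rw [vertexWeight_of_mem_sphereW_succ hv, card_sphereW_succ]

lemma sphAvg_succ_eq_sum_ballW (hd : d ≠ 0) {Ω : Type*} (Y : Vertex d → Ω → ℝ) (r : ℕ) :
    sphAvg d Y (r + 1) = ∑ v ∈ ballW d (r + 1), fun ω => vertexWeight v * Y v ω := by
  ext ω
  have hsphere : ∀ k, ∑ v ∈ sphereW d (k + 1), vertexWeight v * Y v ω =
      (((d + 1) * d ^ k : ℕ) : ℝ)⁻¹ * ∑ v ∈ sphereW d (k + 1), Y v ω := fun k => by
    rw [Finset.mul_sum]
    exact Finset.sum_congr rfl fun v hv => by rw [vertexWeight_of_mem_sphereW_succ hv]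
  simp only [Finset.sum_apply, sum_ballW, hsphere]
  induction r with
  | zero => simp [sphAvg_one]
  | succ r ih => rw [sphAvg_succ Y hd, ih, Finset.sum_range_succ _ (r + 1)]

end Tree

section SphAvgCgf

/-- The cumulant generating function `∑ₖ |Wₖ| K (t / |Wₖ|)`, `1 ≤ k ≤ r`, of the spherical average
at depth `r` when the increments have cumulant generating function `K`. -/
def sphAvgCgf (d : ℕ) (K : ℝ → ℝ) (r : ℕ) (t : ℝ) : ℝ :=
  ∑ k ∈ range r, ((d : ℝ) + 1) * (d : ℝ) ^ k * K ((((d : ℝ) + 1) * (d : ℝ) ^ k)⁻¹ * t)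

lemma sphAvgCgf_succ (d : ℕ) (K : ℝ → ℝ) (r : ℕ) (t : ℝ) :
    sphAvgCgf d K (r + 1) t =
      ((d : ℝ) + 1) * K (((d : ℝ) + 1)⁻¹ * t) + d * sphAvgCgf d K r ((d : ℝ)⁻¹ * t) := by
  rw [sphAvgCgf, Finset.sum_range_succ', add_comm, sphAvgCgf, Finset.mul_sum]
  congr 1
  · simp
  · refine Finset.sum_congr rfl fun k _ => ?_
    rw [pow_succ, ← mul_assoc, mul_inv (((d : ℝ) + 1) * (d : ℝ) ^ k), mul_assoc _ _ t]
    ring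

lemma sum_ballW_vertexWeight_mul (d : ℕ) (K : ℝ → ℝ) (r : ℕ) (t : ℝ) :
    ∑ v ∈ ballW d r, K (vertexWeight v * t) = sphAvgCgf d K r t := by
  rw [sum_ballW_comp_vertexWeight d r fun w => K (w * t)]
  simp [sphAvgCgf]

lemma abs_sphAvgCgf_le {d : ℕ} (hd : 2 ≤ d) {K : ℝ → ℝ} {C t : ℝ} (hC : 0 ≤ C)
    (hK : ∀ s, |s| ≤ |t| → |K s| ≤ C * s ^ 2) (r : ℕ) : |sphAvgCgf d K r t| ≤ C * t ^ 2 := by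
  have hterm : ∀ k : ℕ, |((d : ℝ) + 1) * d ^ k * K ((((d : ℝ) + 1) * d ^ k)⁻¹ * t)| ≤
      C * t ^ 2 * (2⁻¹ * (1 / 2) ^ k) := fun k => by
    have hd' : (2 : ℝ) ≤ d := by exact_mod_cast hd
    have hN : 2 * 2 ^ k ≤ ((d : ℝ) + 1) * d ^ k := by
      gcongr
      linarith
    set N : ℝ := ((d : ℝ) + 1) * d ^ k
    have hN1 : 1 ≤ N := by linarith [one_le_pow₀ (M₀ := ℝ) one_le_two (n := k)]
    have hNt : |N⁻¹ * t| ≤ |t| := by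
      rw [abs_mul, abs_of_nonneg (by positivity)]
      exact mul_le_of_le_one_left (abs_nonneg t) (inv_le_one_of_one_le₀ hN1)
    calc |N * K (N⁻¹ * t)| ≤ N * (C * (N⁻¹ * t) ^ 2) := by
          rw [abs_mul, abs_of_nonneg (by positivity)]
          gcongr
          exact hK _ hNt
      _ = C * t ^ 2 * N⁻¹ := by field_simp
      _ ≤ C * t ^ 2 * (2⁻¹ * (1 / 2) ^ k) := by
          rw [one_div, inv_pow, ← mul_inv]
          gcongr
  calc |sphAvgCgf d K r t|
      ≤ ∑ k ∈ range r, C * t ^ 2 * (2⁻¹ * (1 / 2) ^ k) :=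
        (Finset.abs_sum_le_sum_abs _ _).trans (Finset.sum_le_sum fun k _ => hterm k)
    _ = C * t ^ 2 * (2⁻¹ * ∑ k ∈ range r, (1 / 2) ^ k) := by rw [Finset.mul_sum, Finset.mul_sum]
    _ ≤ C * t ^ 2 * (2⁻¹ * 2) := by gcongr; exact sum_geometric_two_le r
    _ = C * t ^ 2 := by ring

lemma eventually_forall_abs_le {p : ℝ → Prop} (h : ∀ᶠ s in 𝓝 0, p s) :
    ∀ᶠ t in 𝓝 (0 : ℝ), ∀ s, |s| ≤ |t| → p s := by
  obtain ⟨ε, hε, hp⟩ := Metric.eventually_nhds_iff.1 h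
  refine Metric.eventually_nhds_iff.2 ⟨ε, hε, fun t ht s hst => hp ?_⟩
  rw [Real.dist_0_eq_abs] at ht ⊢
  exact hst.trans_lt ht

lemma exists_eventually_abs_sphAvgCgf_le {d : ℕ} (hd : 2 ≤ d) {K : ℝ → ℝ}
    (hK : K =O[𝓝 0] fun s => s ^ 2) :
    ∃ C, ∀ᶠ t in 𝓝 0, ∀ r, |sphAvgCgf d K r t| ≤ C * t ^ 2 := by
  obtain ⟨C, hC, hKC⟩ := hK.exists_nonneg
  refine ⟨C, ?_⟩
  filter_upwards [eventually_forall_abs_le hKC.bound] with t ht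
  exact abs_sphAvgCgf_le hd hC (by simpa using ht)

end SphAvgCgf

section Cgf

variable {Ω : Type*} [MeasurableSpace Ω] {P : Measure Ω}

lemma isBigO_cgf_sq [IsProbabilityMeasure P] {X : Ω → ℝ} (hX : 0 ∈ interior (integrableExpSet X P))
    (hmean : ∫ ω, X ω ∂P = 0) : cgf X P =O[𝓝 0] fun s => s ^ 2 := by
  simpa using isBigO_sub_pow_of_iteratedDeriv_eq_zero (analyticAt_cgf hX) (n := 2) fun i hi => by
    interval_cases i
    · simp
    · simp [iteratedDeriv_one, deriv_cgf_zero hX, hmean]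

lemma cgf_eq_of_hasLaw {X : Ω → ℝ} {μ : Measure ℝ} (hX : HasLaw X μ P) : cgf X P = cgf id μ := by
  ext t
  rw [cgf, cgf, ← hX.map_eq, mgf_id_map hX.aemeasurable]

lemma integrableExpSet_eq_of_hasLaw {X : Ω → ℝ} {μ : Measure ℝ} (hX : HasLaw X μ P) :
    integrableExpSet X P = integrableExpSet id μ := by
  ext t
  rw [← hX.map_eq]
  exact (integrable_map_measure (f := X) (g := fun x => Real.exp (t * x)) (by fun_prop)
    hX.aemeasurable).symm

lemma mem_integrableExpSet_const_mul {X : Ω → ℝ} {c t : ℝ} :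
    t ∈ integrableExpSet (fun ω => c * X ω) P ↔ c * t ∈ integrableExpSet X P := by
  simp only [integrableExpSet, Set.mem_ofPred_eq, mul_left_comm t c, mul_assoc]

lemma mem_integrableExpSet_sum {ι : Type*} {X : ι → Ω → ℝ} (hindep : iIndepFun X P)
    (hX : ∀ i, AEMeasurable (X i) P) {s : Finset ι} {t : ℝ}
    (ht : ∀ i ∈ s, t ∈ integrableExpSet (X i) P) : t ∈ integrableExpSet (∑ i ∈ s, X i) P := by
  have := hindep.isProbabilityMeasure
  refine mgf_pos_iff.1 ?_
  rw [hindep.mgf_sum₀ hX]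
  exact Finset.prod_pos fun i hi => mgf_pos (ht i hi)

end Cgf

section SphericalAverage

variable {Ω : Type*} [MeasurableSpace Ω] {P : Measure Ω} {d : ℕ}
  {X : Vertex d → Ω → ℝ} {μ : Measure ℝ}

lemma mem_integrableExpSet_vertexWeight_mul [IsProbabilityMeasure P]
    (hlaw : ∀ v, HasLaw (X v) μ P) {t : ℝ} (ht : t ∈ integrableExpSet id μ) (v : Vertex d) :
    t ∈ integrableExpSet (fun ω => vertexWeight v * X v ω) P := by
  rw [mem_integrableExpSet_const_mul]
  refine convex_integrableExpSet.smul_mem_of_zero_mem ?_ ?_ (vertexWeight_mem_Icc v)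
  · simp [integrableExpSet]
  · rwa [integrableExpSet_eq_of_hasLaw (hlaw v)]

lemma iIndepFun_vertexWeight_mul (hindep : iIndepFun X P) :
    iIndepFun (fun v ω => vertexWeight v * X v ω) P :=
  hindep.comp (fun v x => vertexWeight v * x) fun _ => measurable_const_mul _

lemma mem_integrableExpSet_sphAvg (hd : d ≠ 0) (hindep : iIndepFun X P)
    (hlaw : ∀ v, HasLaw (X v) μ P) {t : ℝ} (ht : t ∈ integrableExpSet id μ) (r : ℕ) :
    t ∈ integrableExpSet (sphAvg d X (r + 1)) P := by
  have := hindep.isProbabilityMeasure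
  rw [sphAvg_succ_eq_sum_ballW hd]
  exact mem_integrableExpSet_sum (iIndepFun_vertexWeight_mul hindep)
    (fun v => (hlaw v).aemeasurable.const_mul _)
    fun v _ => mem_integrableExpSet_vertexWeight_mul hlaw ht v

lemma cgf_sphAvg (hd : d ≠ 0) (hindep : iIndepFun X P) (hlaw : ∀ v, HasLaw (X v) μ P)
    {t : ℝ} (ht : t ∈ integrableExpSet id μ) (r : ℕ) :
    cgf (sphAvg d X (r + 1)) P t = sphAvgCgf d (cgf id μ) (r + 1) t := by
  have := hindep.isProbabilityMeasure
  rw [sphAvg_succ_eq_sum_ballW hd, (iIndepFun_vertexWeight_mul hindep).cgf_sum₀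
    (fun v => (hlaw v).aemeasurable.const_mul _)
    fun v _ => mem_integrableExpSet_vertexWeight_mul hlaw ht v, ← sum_ballW_vertexWeight_mul]
  refine Finset.sum_congr rfl fun v _ => ?_
  rw [cgf, mgf_const_mul, ← cgf, cgf_eq_of_hasLaw (hlaw v)]

variable {H : Ω → ℝ}

lemma eventually_tendsto_sphAvgCgf (hd : 2 ≤ d) (hμ : 0 ∈ interior (integrableExpSet id μ))
    (hμsq : cgf id μ =O[𝓝 0] fun s => s ^ 2) (hindep : iIndepFun X P)
    (hlaw : ∀ v, HasLaw (X v) μ P)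
    (hH : ∀ᵐ ω ∂P, Tendsto (fun r => sphAvg d X r ω) atTop (𝓝 (H ω))) :
    ∀ᶠ t in 𝓝 0, t ∈ integrableExpSet H P ∧
      Tendsto (fun r => sphAvgCgf d (cgf id μ) r t) atTop (𝓝 (cgf H P t)) := by
  have := hindep.isProbabilityMeasure
  have hd0 : d ≠ 0 := by omega
  obtain ⟨C, hC⟩ := exists_eventually_abs_sphAvgCgf_le hd hμsq
  have hexp := mem_interior_iff_mem_nhds.1 hμ
  have hdouble : Tendsto (fun t : ℝ => 2 * t) (𝓝 0) (𝓝 0) :=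
    Continuous.tendsto' (by fun_prop) _ _ (by simp)
  filter_upwards [hexp, hdouble.eventually hexp, hdouble.eventually hC] with t ht h2t hCt
  have hmgf : ∀ r, mgf (sphAvg d X (r + 1)) P (2 * t) ≤ Real.exp (C * (2 * t) ^ 2) := fun r => by
    rw [← exp_cgf (mem_integrableExpSet_sphAvg hd0 hindep hlaw h2t r),
      cgf_sphAvg hd0 hindep hlaw h2t]
    exact Real.exp_le_exp.2 ((le_abs_self _).trans (hCt _))
  obtain ⟨htH, hlim⟩ := mem_integrableExpSet_and_tendsto_mgf
    (mem_integrableExpSet_sphAvg hd0 hindep hlaw h2t) hmgf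
    (hH.mono fun ω hω => (tendsto_add_atTop_iff_nat 1).2 hω)
  refine ⟨htH, (tendsto_add_atTop_iff_nat 1).1 ?_⟩
  simp only [← cgf_sphAvg hd0 hindep hlaw ht]
  exact hlim.log (mgf_pos htH).ne'

end SphericalAverage

section Limit

variable {d : ℕ} {G K : ℝ → ℝ}

lemma isBigO_sq_of_tendsto_sphAvgCgf (hd : 2 ≤ d) (hK : K =O[𝓝 0] fun s => s ^ 2)
    (hG : ∀ᶠ t in 𝓝 0, Tendsto (fun r => sphAvgCgf d K r t) atTop (𝓝 (G t))) :
    G =O[𝓝 0] fun t => t ^ 2 := by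
  obtain ⟨C, hC⟩ := exists_eventually_abs_sphAvgCgf_le hd hK
  refine Asymptotics.IsBigO.of_bound C ?_
  filter_upwards [hG, hC] with t hGt hCt
  rw [Real.norm_of_nonneg (sq_nonneg t)]
  exact le_of_tendsto' hGt.norm hCt

lemma eventually_eq_of_tendsto_sphAvgCgf
    (hG : ∀ᶠ t in 𝓝 0, Tendsto (fun r => sphAvgCgf d K r t) atTop (𝓝 (G t))) :
    ∀ᶠ t in 𝓝 0, G t = ((d : ℝ) + 1) * K (((d : ℝ) + 1)⁻¹ * t) + d * G ((d : ℝ)⁻¹ * t) := by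
  have hscale : Tendsto (fun t : ℝ => (d : ℝ)⁻¹ * t) (𝓝 0) (𝓝 0) :=
    Continuous.tendsto' (by fun_prop) _ _ (by simp)
  filter_upwards [hG, hscale.eventually hG] with t ht htd
  refine tendsto_nhds_unique ((tendsto_add_atTop_iff_nat 1).2 ht) ?_
  simp only [sphAvgCgf_succ]
  exact (htd.const_mul _).const_add _

end Limit

theorem free_limit_cumulants_general {Ω : Type*} [MeasurableSpace Ω] (P : Measure Ω)
    (d : ℕ) (hd : 2 ≤ d)
    (μ : Measure ℝ) (hμ : 0 ∈ interior (integrableExpSet id μ)) (hmean : ∫ x, x ∂μ = 0)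
    (X : Vertex d → Ω → ℝ) (hindep : iIndepFun X P) (hlaw : ∀ v, HasLaw (X v) μ P)
    (H : Ω → ℝ) (hH : ∀ᵐ ω ∂P, Tendsto (fun r => sphAvg d X r ω) atTop (𝓝 (H ω))) :
    iteratedDeriv 1 (cgf H P) 0 = 0 ∧
    ∀ n : ℕ, 2 ≤ n →
      iteratedDeriv n (cgf H P) 0 = iteratedDeriv n (cgf id μ) 0 *
        (d : ℝ) ^ (n - 1) / (((d : ℝ) ^ (n - 1) - 1) * ((d : ℝ) + 1) ^ (n - 1)) := by
  have := hindep.isProbabilityMeasure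
  have : IsProbabilityMeasure μ := (hlaw (0, [])).isProbabilityMeasure_iff.1 this
  have hμsq := isBigO_cgf_sq hμ hmean
  have hconv := eventually_tendsto_sphAvgCgf hd hμ hμsq hindep hlaw hH
  have hlim := hconv.mono fun _ ht => ht.2
  have hHexp : 0 ∈ interior (integrableExpSet H P) :=
    mem_interior_iff_mem_nhds.2 (hconv.mono fun _ ht => ht.1)
  constructor
  · have hHsq := isBigO_sq_of_tendsto_sphAvgCgf hd hμsq hlim
    rw [iteratedDeriv_one]
    exact (Asymptotics.IsBigO.hasFDerivAt (𝕜 := ℝ)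
      (by simpa using hHsq) one_lt_two).hasDerivAt.deriv
  · intro n hn
    obtain ⟨m, rfl⟩ : ∃ m, n = m + 1 := ⟨n - 1, by omega⟩
    exact iteratedDeriv_eq_of_functional_equation (by positivity) (by positivity)
      (one_lt_pow₀ (by exact_mod_cast hd) (by omega)).ne' (analyticAt_cgf hHexp).contDiffAt
      (analyticAt_cgf hμ).contDiffAt (eventually_eq_of_tendsto_sphAvgCgf hlim)

section LatticeLaw

/-- The law on `ℝ` of a random variable with values in `ℤ` and probability mass function `p`. -/
def latticeLaw (p : ℤ → ℝ) : Measure ℝ :=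
  Measure.sum fun j : ℤ => ENNReal.ofReal (p j) • Measure.dirac (j : ℝ)

variable {p : ℤ → ℝ}

lemma integral_latticeLaw (hp : ∀ j, 0 ≤ p j) (f : ℝ → ℝ) :
    ∫ x, f x ∂latticeLaw p = ∑' j : ℤ, f j * p j := by
  rw [latticeLaw, integral_sum_dirac (by simp)]
  refine tsum_congr fun j => ?_
  rw [ENNReal.toReal_ofReal (hp j), smul_eq_mul, mul_comm]

lemma cgf_latticeLaw (hp : ∀ j, 0 ≤ p j) :
    cgf id (latticeLaw p) = fun s => Real.log (∑' j : ℤ, Real.exp (s * j) * p j) := by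
  ext s
  simp [cgf, mgf, integral_latticeLaw hp fun x => Real.exp (s * x)]

lemma mem_integrableExpSet_latticeLaw (hp : ∀ j, 0 ≤ p j) {s : ℝ} :
    s ∈ integrableExpSet id (latticeLaw p) ↔ Summable fun j : ℤ => Real.exp (s * j) * p j := by
  refine (integrable_sum_dirac_iff (by simp)).trans (summable_congr fun j => ?_)
  rw [ENNReal.toReal_ofReal (hp j), Real.norm_of_nonneg (Real.exp_nonneg _), mul_comm, id_eq]

lemma integral_id_latticeLaw_of_even (hp : ∀ j, 0 ≤ p j) (hpeven : ∀ j, p (-j) = p j) :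
    ∫ x, x ∂latticeLaw p = 0 := by
  have hodd : ∑' j : ℤ, (j : ℝ) * p j = -∑' j : ℤ, (j : ℝ) * p j := by
    conv_lhs => rw [← (Equiv.neg ℤ).tsum_eq]
    simp [hpeven, tsum_neg]
  rw [integral_latticeLaw hp fun x => x]
  linarith

lemma hasLaw_latticeLaw {Ω : Type*} [MeasurableSpace Ω] {P : Measure Ω} {Y : Ω → ℤ}
    (hY : AEMeasurable Y P) (hlaw : ∀ j : ℤ, P {ω | Y ω = j} = ENNReal.ofReal (p j)) :
    HasLaw (fun ω => (Y ω : ℝ)) (latticeLaw p) P := by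
  have hcast : Measurable fun j : ℤ => (j : ℝ) := measurable_from_top
  refine ⟨hcast.comp_aemeasurable hY, ?_⟩
  change P.map ((fun j : ℤ => (j : ℝ)) ∘ Y) = latticeLaw p
  rw [← AEMeasurable.map_map_of_aemeasurable hcast.aemeasurable hY,
    ← Measure.sum_smul_dirac (P.map Y), Measure.map_sum hcast.aemeasurable, latticeLaw]
  congr 1 with j : 1
  rw [Measure.map_smul, Measure.map_dirac' hcast,
    Measure.map_apply_of_aemeasurable hY (measurableSet_singleton j)]
  exact congrArg (· • _) (hlaw j)

end LatticeLaw

/-- Cumulant relation between the a.s. limit `H` of the spherical averages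
of the free height field and a single increment: `κ₁ᵀ = 0` and, for `n ≥ 2`,
`κ_nᵀ = κ_n · d^{n-1} / ((d^{n-1} - 1)(d+1)^{n-1})`. The `n`-th cumulant is the `n`-th
derivative at `0` of the logarithm of the moment generating function. -/
theorem free_limit_cumulants
    {Ω : Type} [MeasurableSpace Ω] (P : Measure Ω) [IsProbabilityMeasure P]
    (d : ℕ) (hd : 2 ≤ d)
    (p : ℤ → ℝ) (hp0 : ∀ j, 0 ≤ p j) (hpsum : Summable p) (hp1 : ∑' j, p j = 1)
    (hsymm : ∀ j, p (-j) = p j)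
    (R : ℝ) (hR : 0 < R)
    (hψ : ∀ s : ℝ, |s| < R → Summable (fun j : ℤ => Real.exp (s * j) * p j))
    (Y : Vertex d → Ω → ℤ) (hmeas : ∀ v, Measurable (Y v))
    (hindep : iIndepFun Y P)
    (hlaw : ∀ v (j : ℤ), P {ω | Y v ω = j} = ENNReal.ofReal (p j))
    (H : Ω → ℝ) (hHmeas : Measurable H)
    (hH : ∀ᵐ ω ∂P, Tendsto (fun r => sphAvg d (fun v ω => (Y v ω : ℝ)) r ω) atTop (𝓝 (H ω))) :
    iteratedDeriv 1 (fun t : ℝ => Real.log (∫ ω, Real.exp (t * H ω) ∂P)) 0 = 0 ∧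
    ∀ n : ℕ, 2 ≤ n →
      iteratedDeriv n (fun t : ℝ => Real.log (∫ ω, Real.exp (t * H ω) ∂P)) 0 =
        iteratedDeriv n (fun s : ℝ => Real.log (∑' j : ℤ, Real.exp (s * j) * p j)) 0 *
          (d : ℝ) ^ (n - 1) / (((d : ℝ) ^ (n - 1) - 1) * ((d : ℝ) + 1) ^ (n - 1)) := by
  have hbounds : 0 ∈ interior (integrableExpSet id (latticeLaw p)) :=
    mem_interior.2 ⟨Metric.ball 0 R,
      fun s hs => (mem_integrableExpSet_latticeLaw hp0).2 (hψ s (by simpa using hs)),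
      Metric.isOpen_ball, Metric.mem_ball_self hR⟩
  rw [← cgf_latticeLaw hp0]
  exact free_limit_cumulants_general P d hd (latticeLaw p) hbounds
    (integral_id_latticeLaw_of_even hp0 hsymm) _
    (hindep.comp (fun _ (j : ℤ) => (j : ℝ)) fun _ => measurable_from_top)
    (fun v => hasLaw_latticeLaw (hmeas v).aemeasurable (hlaw v)) H hH
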